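/- Let R be a ring, let C₁ →^{f₁} C₂ →^{f₂} C₃ → ⋯ be a countable direct system of finitely generated R-modules, let I be a set, and let {M_i}_{i∈I} be a family of R-modules. Then the tower (Hom_R(C_n, ⊕_{i∈I} M_i), Hom_R(f_n, ⊕_{i∈I} M_i))_{n∈ℕ} satisfies the Mittag-Leffler condition if and only if the tower (Hom_R(C_n, ∏_{i∈I} M_i), Hom_R(f_n, ∏_{i∈I} M_i))_{n∈ℕ} satisfies the Mittag-Leffler condition. -/

import Mathlib

/-!
Both conditions are equivalent to the same one: the towers `Hom(Cₙ, Mᵢ)` satisfy the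
Mittag-Leffler condition with, for each `m`, a stabilisation index `d` that does not depend on
`i` (`mittagLeffler_iff_uniform`). For this it is enough that a map `g : Cₘ → N` factors through
a given transition map `Cₘ → Cₘ₊ₖ` as soon as all its components `Cₘ → Mᵢ` do. For `N = ∏ᵢ Mᵢ`
the extensions of the components are assembled into a map to the product. For `N = ⨁ᵢ Mᵢ`, only
finitely many components of `g` are nonzero because `Cₘ` is finitely generated
(`exists_finset_support`), so the sum of the extensions of those components is the required map.
-/

/-!
STATEMENT 16 (Corollary 2.6): for a countable direct system `(Cₙ, fₙ)` of finitely
generated modules and a family `(Mᵢ)_{i∈I}` of modules, the tower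
`(Hom(Cₙ, ⊕ᵢ Mᵢ), Hom(fₙ, ⊕ᵢ Mᵢ))` satisfies the Mittag-Leffler condition iff the
tower `(Hom(Cₙ, ∏ᵢ Mᵢ), Hom(fₙ, ∏ᵢ Mᵢ))` does.
-/

universe u v w

variable {R : Type u} [Ring R]

/-- Composite `λ_m ∘ ⋯ ∘ λ_{m+k-1} : H_{m+k} → H_m` in a tower of abelian groups. -/
def towerComp {H : ℕ → Type v} [∀ n, AddCommGroup (H n)]
    (lam : ∀ n, H (n + 1) →+ H n) (m : ℕ) : (k : ℕ) → H (m + k) →+ H m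
  | 0 => AddMonoidHom.id (H m)
  | k + 1 => (towerComp lam m k).comp (lam (m + k))

/-- The Mittag-Leffler condition: all the descending chains of images are stationary. -/
def MittagLeffler {H : ℕ → Type v} [∀ n, AddCommGroup (H n)]
    (lam : ∀ n, H (n + 1) →+ H n) : Prop :=
  ∀ m, ∃ d, ∀ j, d ≤ j →
    Set.range ⇑(towerComp lam m j) = Set.range ⇑(towerComp lam m d)

/-- `Hom_R(fₙ, M) : Hom_R(C_{n+1}, M) → Hom_R(Cₙ, M)`, `g ↦ g ∘ fₙ`. -/
def homMap {C : ℕ → Type u} [∀ n, AddCommGroup (C n)] [∀ n, Module R (C n)]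
    (f : ∀ n, C n →ₗ[R] C (n + 1)) (M : Type v) [AddCommGroup M] [Module R M]
    (n : ℕ) : (C (n + 1) →ₗ[R] M) →+ (C n →ₗ[R] M) where
  toFun g := g.comp (f n)
  map_zero' := by ext x; simp
  map_add' g h := by ext x; simp

/-- The transition map `Cₘ → Cₘ₊ₖ` of the direct system. -/
def transMap {C : ℕ → Type u} [∀ n, AddCommGroup (C n)] [∀ n, Module R (C n)]
    (f : ∀ n, C n →ₗ[R] C (n + 1)) (m : ℕ) : (k : ℕ) → C m →ₗ[R] C (m + k)
  | 0 => LinearMap.id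
  | k + 1 => (f (m + k)).comp (transMap f m k)

theorem towerComp_homMap {C : ℕ → Type u} [∀ n, AddCommGroup (C n)] [∀ n, Module R (C n)]
    (f : ∀ n, C n →ₗ[R] C (n + 1)) (N : Type v) [AddCommGroup N] [Module R N] (m k : ℕ)
    (g : C (m + k) →ₗ[R] N) :
    towerComp (H := fun n => C n →ₗ[R] N) (homMap f N) m k g = g.comp (transMap f m k) := by
  induction k with
  | zero => rfl
  | succ k ih => exact ih (g.comp (f (m + k)))

theorem mem_range_towerComp {C : ℕ → Type u} [∀ n, AddCommGroup (C n)] [∀ n, Module R (C n)]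
    (f : ∀ n, C n →ₗ[R] C (n + 1)) (N : Type v) [AddCommGroup N] [Module R N] (m k : ℕ)
    (g : C m →ₗ[R] N) :
    g ∈ Set.range (towerComp (H := fun n => C n →ₗ[R] N) (homMap f N) m k) ↔
      ∃ h : C (m + k) →ₗ[R] N, h.comp (transMap f m k) = g :=
  exists_congr fun h => by rw [towerComp_homMap]

/-- If every `Mᵢ` is a retract of `N`, and factoring maps to `N` through transition maps can be
tested on components, then the Mittag-Leffler condition for `N` is the Mittag-Leffler condition
for the `Mᵢ`, uniformly in `i`. -/
theorem mittagLeffler_iff_uniform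
    {C : ℕ → Type u} [∀ n, AddCommGroup (C n)] [∀ n, Module R (C n)]
    (f : ∀ n, C n →ₗ[R] C (n + 1)) {I : Type v} {M : I → Type w}
    [∀ i, AddCommGroup (M i)] [∀ i, Module R (M i)]
    (N : Type*) [AddCommGroup N] [Module R N]
    (ι : ∀ i, M i →ₗ[R] N) (π : ∀ i, N →ₗ[R] M i) (hπι : ∀ i x, π i (ι i x) = x)
    (hN : ∀ m k (g : C m →ₗ[R] N),
      (∀ i, ∃ h : C (m + k) →ₗ[R] M i, h.comp (transMap f m k) = (π i).comp g) →
        ∃ h : C (m + k) →ₗ[R] N, h.comp (transMap f m k) = g) :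
    MittagLeffler (H := fun n => C n →ₗ[R] N) (homMap f N) ↔
      ∀ m, ∃ d, ∀ j, d ≤ j → ∀ i, ∀ g : C m →ₗ[R] M i,
        (∃ h : C (m + j) →ₗ[R] M i, h.comp (transMap f m j) = g) ↔
          ∃ h : C (m + d) →ₗ[R] M i, h.comp (transMap f m d) = g := by
  have hπ : ∀ m k (g : C m →ₗ[R] N),
      (∃ h : C (m + k) →ₗ[R] N, h.comp (transMap f m k) = g) ↔
        ∀ i, ∃ h : C (m + k) →ₗ[R] M i, h.comp (transMap f m k) = (π i).comp g := by
    refine fun m k g => ⟨?_, hN m k g⟩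
    rintro ⟨h, rfl⟩ i
    exact ⟨(π i).comp h, rfl⟩
  have hι : ∀ m k i (g : C m →ₗ[R] M i),
      (∃ h : C (m + k) →ₗ[R] N, h.comp (transMap f m k) = (ι i).comp g) ↔
        ∃ h : C (m + k) →ₗ[R] M i, h.comp (transMap f m k) = g := by
    refine fun m k i g => ⟨?_, ?_⟩
    · rintro ⟨h, hh⟩
      refine ⟨(π i).comp h, ?_⟩
      rw [LinearMap.comp_assoc, hh]
      ext x
      simp [hπι]
    · rintro ⟨h, rfl⟩
      exact ⟨(ι i).comp h, rfl⟩
  refine forall_congr' fun m => exists_congr fun d => forall_congr' fun j =>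
    imp_congr_right fun _ => ?_
  rw [Set.ext_iff]
  simp only [mem_range_towerComp]
  constructor
  · intro H i g
    rw [← hι, ← hι, H]
  · intro H g
    rw [hπ, hπ]
    exact forall_congr' fun i => H i _

theorem exists_finset_support {A : Type*} [AddCommGroup A] [Module R A] [Module.Finite R A]
    {I : Type v} {M : I → Type w} [∀ i, AddCommGroup (M i)] [∀ i, Module R (M i)]
    (g : A →ₗ[R] Π₀ i, M i) : ∃ S : Finset I, ∀ i ∉ S, ∀ x, g x i = 0 := by
  classical
  obtain ⟨T, hT⟩ := Module.Finite.fg_top (R := R) (M := A)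
  refine ⟨T.biUnion fun t => (g t).support, fun i hi x => ?_⟩
  have hx : x ∈ Submodule.span R (T : Set A) := hT ▸ Submodule.mem_top
  induction hx using Submodule.span_induction with
  | mem t ht =>
    by_contra h
    exact hi (Finset.mem_biUnion.2 ⟨t, ht, DFinsupp.mem_support_iff.2 h⟩)
  | zero => simp
  | add x y _ _ hx hy => simp [hx, hy]
  | smul r x _ hx => simp [hx]

theorem hom_into_directSum_ML_iff_hom_into_product_ML
    (C : ℕ → Type u) [∀ n, AddCommGroup (C n)] [∀ n, Module R (C n)]
    [∀ n, Module.Finite R (C n)]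
    (f : ∀ n, C n →ₗ[R] C (n + 1))
    (I : Type v) (M : I → Type w)
    [∀ i, AddCommGroup (M i)] [∀ i, Module R (M i)] :
    MittagLeffler (H := fun n => C n →ₗ[R] Π₀ i, M i) (homMap f (Π₀ i, M i)) ↔
      MittagLeffler (H := fun n => C n →ₗ[R] ∀ i, M i) (homMap f (∀ i, M i)) := by
  classical
  rw [mittagLeffler_iff_uniform f (M := M) (Π₀ i, M i)
      (fun i => DFinsupp.lsingle i) (fun i => DFinsupp.lapply i) (by simp) ?_,
    mittagLeffler_iff_uniform f (M := M) (∀ i, M i)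
      (fun i => LinearMap.single R M i) (fun i => LinearMap.proj i) (by simp) ?_]
  · intro m k g H
    choose h hh using H
    refine ⟨LinearMap.pi h, ?_⟩
    ext x i
    exact LinearMap.congr_fun (hh i) x
  · intro m k g H
    choose h hh using H
    obtain ⟨S, hS⟩ := exists_finset_support g
    refine ⟨∑ i ∈ S, (DFinsupp.lsingle (R := R) i).comp (h i), ?_⟩
    ext x i
    have hx : h i (transMap f m k x) = g x i := LinearMap.congr_fun (hh i) x
    by_cases hi : i ∈ S
    · simp [DFinsupp.single_apply, hi, hx]
    · simp [DFinsupp.single_apply, hi, hS i hi x]
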